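/- Let φ, Φ: S_{m−1} → S_m be defined by φ(π_1⋯π_{m−1}) = (π_1+1)(π_2+1)⋯(π_{m−1}+1)·1 and Φ(π_1⋯π_{m−1}) = π_1π_2⋯π_{m−1}·m. For every n ≥ 5, the set S_n(132;312) of permutations of {1,…,n} avoiding 132 and containing 312 exactly once equals {φ(π) : π ∈ S_{n−1}(132;312)} ∪ {Φ(π) : π ∈ S_{n−1}(132;312)}; moreover S_4(132;312) = {3124, 4231}. -/

import Mathlib

/-- Number of occurrences of the pattern `α ∈ S_k` in the permutation `π ∈ S_n`:
the number of strictly increasing choices of `k` indices such that the corresponding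
subword of `π` is order-isomorphic to `α`. -/
noncomputable def occCount {k n : ℕ} (α : Equiv.Perm (Fin k)) (π : Equiv.Perm (Fin n)) : ℕ :=
  Nat.card {f : Fin k → Fin n // StrictMono f ∧ ∀ a b : Fin k, α a < α b ↔ π (f a) < π (f b)}

/-- `π` avoids the pattern `α`. -/
def avoids {k n : ℕ} (α : Equiv.Perm (Fin k)) (π : Equiv.Perm (Fin n)) : Prop :=
  occCount α π = 0

/-- `π` contains the pattern `α` exactly once. -/
def containsOnce {k n : ℕ} (α : Equiv.Perm (Fin k)) (π : Equiv.Perm (Fin n)) : Prop :=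
  occCount α π = 1

/-- The pattern `123` (as a permutation of `Fin 3`, 0-indexed). -/
def p123 : Equiv.Perm (Fin 3) := ⟨![0,1,2], ![0,1,2], by decide, by decide⟩
/-- The pattern `132`. -/
def p132 : Equiv.Perm (Fin 3) := ⟨![0,2,1], ![0,2,1], by decide, by decide⟩
/-- The pattern `213`. -/
def p213 : Equiv.Perm (Fin 3) := ⟨![1,0,2], ![1,0,2], by decide, by decide⟩
/-- The pattern `231`. -/
def p231 : Equiv.Perm (Fin 3) := ⟨![1,2,0], ![2,0,1], by decide, by decide⟩
/-- The pattern `312`. -/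
def p312 : Equiv.Perm (Fin 3) := ⟨![2,0,1], ![1,2,0], by decide, by decide⟩
/-- The pattern `321`. -/
def p321 : Equiv.Perm (Fin 3) := ⟨![2,1,0], ![2,1,0], by decide, by decide⟩

/-- `s_n(α;β)`: the number of permutations of `{1,…,n}` that avoid `α` and contain `β`
exactly once. -/
noncomputable def sAvoidContain (α β : Equiv.Perm (Fin 3)) (n : ℕ) : ℕ :=
  Nat.card {π : Equiv.Perm (Fin n) // avoids α π ∧ containsOnce β π}

/-- `s_n(∅;{α,β})`: the number of permutations of `{1,…,n}` that contain each of `α` and `β`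
exactly once. -/
noncomputable def sContainBoth (α β : Equiv.Perm (Fin 3)) (n : ℕ) : ℕ :=
  Nat.card {π : Equiv.Perm (Fin n) // containsOnce α π ∧ containsOnce β π}

/-- `φ : S_m → S_{m+1}` appends a new smallest element at the end:
`φ(π₁…π_m) = (π₁+1)(π₂+1)⋯(π_m+1)·1`. -/
def phi {m : ℕ} (π : Equiv.Perm (Fin m)) : Equiv.Perm (Fin (m + 1)) where
  toFun i := Fin.lastCases 0 (fun j => (π j).succ) i
  invFun v := Fin.cases (Fin.last m) (fun j => (π.symm j).castSucc) v
  left_inv i := by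
    induction i using Fin.lastCases with
    | last => simp
    | cast j => simp
  right_inv v := by
    induction v using Fin.cases with
    | zero => simp
    | succ j => simp

/-- `Φ : S_m → S_{m+1}` appends a new largest element at the end:
`Φ(π₁…π_m) = π₁π₂⋯π_m·(m+1)`. -/
def Phi {m : ℕ} (π : Equiv.Perm (Fin m)) : Equiv.Perm (Fin (m + 1)) where
  toFun i := Fin.lastCases (Fin.last m) (fun j => (π j).castSucc) i
  invFun v := Fin.lastCases (Fin.last m) (fun j => (π.symm j).castSucc) v
  left_inv i := by
    induction i using Fin.lastCases with
    | last => simp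
    | cast j => simp
  right_inv v := by
    induction v using Fin.lastCases with
    | last => simp
    | cast j => simp

/-- `S_n(α;β)`: the set of permutations of `{1,…,n}` avoiding `α` and containing `β`
exactly once. -/
def SnAvoidContain (α β : Equiv.Perm (Fin 3)) (n : ℕ) : Set (Equiv.Perm (Fin n)) :=
  {π | avoids α π ∧ containsOnce β π}

/-- `S_n(∅;{α,β})`: the set of permutations of `{1,…,n}` containing each of `α` and `β`
exactly once. -/
def SnContainBoth (α β : Equiv.Perm (Fin 3)) (n : ℕ) : Set (Equiv.Perm (Fin n)) :=
  {π | containsOnce α π ∧ containsOnce β π}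

/-- `π` is the permutation whose one-line word (1-indexed positions, values in `{1,…,n}`)
is given by `w`. -/
def hasWord {n : ℕ} (π : Equiv.Perm (Fin n)) (w : ℕ → ℕ) : Prop :=
  ∀ j : Fin n, (π j : ℕ) + 1 = w ((j : ℕ) + 1)

/-- The permutation with one-line word `3124`. -/
def w3124 : Equiv.Perm (Fin 4) := ⟨![2,0,1,3], ![1,2,0,3], by decide, by decide⟩
/-- The permutation with one-line word `4231`. -/
def w4231 : Equiv.Perm (Fin 4) := ⟨![3,1,2,0], ![3,1,2,0], by decide, by decide⟩

theorem occ_eq {m : ℕ} (p : Equiv.Perm (Fin 3)) (u v : Fin 3) (hu : p u < p 2) (hv : p 2 < p v)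
    (π : Equiv.Perm (Fin m)) (σ : Equiv.Perm (Fin (m + 1)))
    (h : ∀ a b, π a < π b ↔ σ a.castSucc < σ b.castSucc)
    (hl : σ (Fin.last m) = 0 ∨ σ (Fin.last m) = Fin.last m) :
    occCount p σ = occCount p π := by
  unfold occCount
  symm
  refine Nat.card_congr (Equiv.ofBijective
    (fun f => ⟨fun i => (f.1 i).castSucc, ?_, ?_⟩) ⟨?_, ?_⟩)
  · intro a b hab
    exact f.2.1 hab
  · intro a b
    rw [f.2.2 a b, h]
  · intro f g hfg
    apply Subtype.ext
    funext i
    have := congrFun (congrArg Subtype.val hfg) i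
    exact Fin.castSucc_injective _ this
  · rintro ⟨f, hf, hp⟩
    have h2 : f 2 ≠ Fin.last m := by
      intro h2
      have h3 := (hp u 2).1 hu
      have h4 := (hp 2 v).1 hv
      rw [h2] at h3 h4
      rcases hl with hl | hl
      · rw [hl] at h3
        exact absurd h3 (Fin.not_lt_zero _)
      · rw [hl] at h4
        exact absurd h4 (not_lt.2 (Fin.le_last _))
    have hne : ∀ i, f i ≠ Fin.last m := by
      intro i hi
      have hi2 : f i ≤ f 2 := hf.monotone (by omega)
      rw [hi] at hi2
      exact h2 (le_antisymm (Fin.le_last _) hi2)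
    refine ⟨⟨fun i => (f i).castPred (hne i), ?_, ?_⟩, ?_⟩
    · intro a b hab
      exact hf hab
    · intro a b
      rw [hp a b, h]
      simp
    · apply Subtype.ext
      funext i
      simp

theorem occ_phi {m : ℕ} (p : Equiv.Perm (Fin 3)) (u v : Fin 3) (hu : p u < p 2) (hv : p 2 < p v)
    (π : Equiv.Perm (Fin m)) : occCount p (phi π) = occCount p π := by
  refine occ_eq p u v hu hv π _ ?_ (Or.inl ?_)
  · intro a b
    simp [phi]
  · simp [phi]

theorem occ_Phi {m : ℕ} (p : Equiv.Perm (Fin 3)) (u v : Fin 3) (hu : p u < p 2) (hv : p 2 < p v)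
    (π : Equiv.Perm (Fin m)) : occCount p (Phi π) = occCount p π := by
  refine occ_eq p u v hu hv π _ ?_ (Or.inr ?_)
  · intro a b
    simp [Phi]
  · simp [Phi]

theorem mem_phi {m : ℕ} (π : Equiv.Perm (Fin m)) :
    phi π ∈ SnAvoidContain p132 p312 (m + 1) ↔ π ∈ SnAvoidContain p132 p312 m := by
  simp only [SnAvoidContain, avoids, containsOnce, Set.mem_ofPred_eq]
  rw [occ_phi p132 0 1 (by decide) (by decide), occ_phi p312 1 0 (by decide) (by decide)]

theorem mem_Phi {m : ℕ} (π : Equiv.Perm (Fin m)) :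
    Phi π ∈ SnAvoidContain p132 p312 (m + 1) ↔ π ∈ SnAvoidContain p132 p312 m := by
  simp only [SnAvoidContain, avoids, containsOnce, Set.mem_ofPred_eq]
  rw [occ_Phi p132 0 1 (by decide) (by decide), occ_Phi p312 1 0 (by decide) (by decide)]

theorem exists_phi {m : ℕ} (σ : Equiv.Perm (Fin (m + 1))) (h : σ (Fin.last m) = 0) :
    ∃ π, phi π = σ := by
  have hne : ∀ j : Fin m, σ j.castSucc ≠ 0 := by
    intro j hj
    rw [← h] at hj
    exact (Fin.castSucc_lt_last j).ne (σ.injective hj)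
  have hinj : Function.Injective (fun j : Fin m => (σ j.castSucc).pred (hne j)) := by
    intro a b hab
    simpa using hab
  refine ⟨Equiv.ofBijective _ (Finite.injective_iff_bijective.1 hinj), ?_⟩
  ext i
  induction i using Fin.lastCases with
  | last => simp [phi, h]
  | cast j => simp [phi]

theorem exists_Phi {m : ℕ} (σ : Equiv.Perm (Fin (m + 1))) (h : σ (Fin.last m) = Fin.last m) :
    ∃ π, Phi π = σ := by
  have hne : ∀ j : Fin m, σ j.castSucc ≠ Fin.last m := by
    intro j hj
    rw [← h] at hj
    exact (Fin.castSucc_lt_last j).ne (σ.injective hj)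
  have hinj : Function.Injective (fun j : Fin m => (σ j.castSucc).castPred (hne j)) := by
    intro a b hab
    simpa using hab
  refine ⟨Equiv.ofBijective _ (Finite.injective_iff_bijective.1 hinj), ?_⟩
  ext i
  induction i using Fin.lastCases with
  | last => simp [Phi, h]
  | cast j => simp [Phi]

theorem no132 {n : ℕ} {π : Equiv.Perm (Fin n)} (h : avoids p132 π) {i j k : Fin n}
    (hij : i < j) (hjk : j < k) (h1 : π i < π k) : π j ≤ π k := by
  by_contra! h2
  unfold avoids occCount at h
  rw [Finite.card_eq_zero_iff] at h
  refine h.false ⟨![i, j, k], ?_, ?_⟩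
  · intro a b hab
    fin_cases a <;> fin_cases b <;> simp_all <;> order
  · intro a b
    fin_cases a <;> fin_cases b <;> simp [p132] <;> order

theorem uniq312 {n : ℕ} {π : Equiv.Perm (Fin n)} (h : containsOnce p312 π) {i j i' j' k : Fin n}
    (hij : i < j) (hjk : j < k) (h1 : π j < π k) (h2 : π k < π i)
    (hij' : i' < j') (hjk' : j' < k) (h1' : π j' < π k) (h2' : π k < π i') :
    i = i' ∧ j = j' := by
  have key : ∀ i j : Fin n, i < j → j < k → π j < π k → π k < π i →
      (StrictMono ![i, j, k] ∧
        ∀ a b : Fin 3, p312 a < p312 b ↔ π (![i, j, k] a) < π (![i, j, k] b)) := by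
    intro i j hij hjk h1 h2
    constructor
    · intro a b hab
      fin_cases a <;> fin_cases b <;> simp_all <;> order
    · intro a b
      fin_cases a <;> fin_cases b <;> simp [p312] <;> order
  unfold containsOnce occCount at h
  have hs := (Nat.card_eq_one_iff_unique.1 h).1
  have := congrArg Subtype.val
    (hs.elim ⟨_, key i j hij hjk h1 h2⟩ ⟨_, key i' j' hij' hjk' h1' h2'⟩)
  exact ⟨congrFun this 0, congrFun this 1⟩

theorem last_cases {m : ℕ} (hm : 3 ≤ m) {σ : Equiv.Perm (Fin (m + 1))}
    (h : σ ∈ SnAvoidContain p132 p312 (m + 1)) :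
    σ (Fin.last m) = 0 ∨ σ (Fin.last m) = Fin.last m := by
  obtain ⟨ha, hc⟩ := h
  by_contra! hne
  obtain ⟨hne0, hnel⟩ := hne
  have hlow : σ (σ.symm 0) < σ (Fin.last m) := by
    rw [Equiv.apply_symm_apply]
    exact Fin.pos_iff_ne_zero.2 hne0
  have hhigh : σ (Fin.last m) < σ (σ.symm (Fin.last m)) := by
    rw [Equiv.apply_symm_apply]
    exact Fin.lt_last_iff_ne_last.2 hnel
  generalize σ.symm 0 = a at hlow
  generalize σ.symm (Fin.last m) = b at hhigh
  have lt_last : ∀ x, σ x ≠ σ (Fin.last m) → x < Fin.last m := by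
    intro x hx
    refine Fin.lt_last_iff_ne_last.2 ?_
    rintro rfl
    exact hx rfl
  have order_hl : ∀ x y, σ x < σ (Fin.last m) → σ (Fin.last m) < σ y → y < x := by
    intro x y hx hy
    by_contra! hxy
    rcases hxy.lt_or_eq with hxy | rfl
    · exact absurd (no132 ha hxy (lt_last y hy.ne') hx) (not_le.2 hy)
    · exact lt_asymm hx hy
  obtain ⟨c, hc'⟩ : ∃ c, c ∉ ({a, b, Fin.last m} : Finset (Fin (m + 1))) := by
    by_contra! hall
    have h1 : (Finset.univ : Finset (Fin (m + 1))) ⊆ {a, b, Fin.last m} := fun x _ => hall x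
    have h2 := Finset.card_le_card h1
    have h3 : ({a, b, Fin.last m} : Finset (Fin (m + 1))).card ≤ 3 := Finset.card_le_three
    simp only [Finset.card_univ, Fintype.card_fin] at h2
    omega
  simp only [Finset.mem_insert, Finset.mem_singleton, not_or] at hc'
  obtain ⟨hca, hcb, hcl⟩ := hc'
  have hcl' : σ c ≠ σ (Fin.last m) := fun h => hcl (σ.injective h)
  rcases lt_or_gt_of_ne hcl' with hlt | hgt
  · exact hca (uniq312 hc (order_hl c b hlt hhigh) (lt_last c hcl') hlt hhigh
      (order_hl a b hlow hhigh) (lt_last a hlow.ne) hlow hhigh).2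
  · exact hcb (uniq312 hc (order_hl a c hlow hgt) (lt_last a hlow.ne) hlow hgt
      (order_hl a b hlow hhigh) (lt_last a hlow.ne) hlow hhigh).1

theorem rule_aux {m : ℕ} (hm : 3 ≤ m) : SnAvoidContain p132 p312 (m + 1) =
    phi '' SnAvoidContain p132 p312 m ∪ Phi '' SnAvoidContain p132 p312 m := by
  ext σ
  constructor
  · intro h
    rcases last_cases hm h with hl | hl
    · obtain ⟨π, rfl⟩ := exists_phi σ hl
      exact Or.inl ⟨π, (mem_phi π).1 h, rfl⟩
    · obtain ⟨π, rfl⟩ := exists_Phi σ hl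
      exact Or.inr ⟨π, (mem_Phi π).1 h, rfl⟩
  · rintro (⟨π, h, rfl⟩ | ⟨π, h, rfl⟩)
    · exact (mem_phi π).2 h
    · exact (mem_Phi π).2 h

theorem S3 : SnAvoidContain p132 p312 3 = {p312} := by
  have hid : ∀ f : Fin 3 → Fin 3, StrictMono f → f = id := by
    intro f hf
    have h1 : f 0 < f 1 := hf (by decide)
    have h2 : f 1 < f 2 := hf (by decide)
    funext i
    fin_cases i <;> simp <;> omega
  ext π
  simp only [Set.mem_singleton_iff]
  constructor
  · rintro ⟨-, h⟩
    unfold containsOnce occCount at h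
    obtain ⟨f, hf, hp⟩ := (Nat.card_eq_one_iff_unique.1 h).2
    obtain rfl := hid f hf
    simp only [id] at hp
    clear h
    revert hp
    revert π
    decide
  · rintro rfl
    constructor
    · unfold avoids occCount
      rw [Finite.card_eq_zero_iff]
      refine ⟨?_⟩
      rintro ⟨f, hf, hp⟩
      obtain rfl := hid f hf
      revert hp
      decide
    · unfold containsOnce occCount
      rw [Nat.card_eq_one_iff_unique]
      refine ⟨⟨?_⟩, ⟨⟨id, strictMono_id, fun a b => Iff.rfl⟩⟩⟩
      rintro ⟨f, hf, -⟩ ⟨g, hg, -⟩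
      apply Subtype.ext
      exact (hid f hf).trans (hid g hg).symm

/-- Generating rule for `S_n(132;312)`, `n = m+1 ≥ 5`:
`S_n(132;312) = φ(S_{n−1}(132;312)) ∪ Φ(S_{n−1}(132;312))`;
moreover `S_4(132;312) = {3124, 4231}`. -/
theorem generating_rule_132_312 :
    (∀ m : ℕ, 5 ≤ m + 1 →
      SnAvoidContain p132 p312 (m + 1) =
        phi '' SnAvoidContain p132 p312 m ∪ Phi '' SnAvoidContain p132 p312 m) ∧
    SnAvoidContain p132 p312 4 = {w3124, w4231} := by
  refine ⟨fun m hm => rule_aux (by omega), ?_⟩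
  have h := rule_aux (le_refl 3)
  rw [S3, Set.image_singleton, Set.image_singleton] at h
  have h1 : phi p312 = w4231 := by decide
  have h2 : Phi p312 = w3124 := by decide
  rw [h1, h2] at h
  rw [h]
  exact Set.union_comm _ _
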